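/- Let q be a prime power and let f, g ∈ F_q[X] be coprime polynomials with f′g − g′f ∉ F_q[X^q], and set h = f/g. Let t be transcendental over F_q and let M_h be the splitting field of the polynomial f(X) − t·g(X) over the rational function field F_q(t). If h is good, i.e., there exists b ∈ P¹(F_q) such that #h⁻¹(b) = deg h, then the constant field of M_h is F_q: every element of M_h that is algebraic over F_q lies in the image of the canonical embedding of F_q into M_h. -/

import Mathlib

open Polynomial Finset

/-- The map `P¹(F) → P¹(F)` induced by the rational function `f/g`
(with `none` playing the role of `∞`). -/
def ratEval {F : Type*} [Field F] [DecidableEq F] (f g : Polynomial F) :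
    Option F → Option F
  | none =>
      if g.natDegree < f.natDegree then none
      else if f.natDegree = g.natDegree then some (f.leadingCoeff / g.leadingCoeff)
      else some 0
  | some x => if g.eval x = 0 then none else some (f.eval x / g.eval x)

open scoped Ring in
theorem hensel_nonmonic (R : Type*) [CommRing R] (I : Ideal R) [IsAdicComplete I R] :
    ∀ (f : R[X]) (a₀ : R) (_ : f.eval a₀ ∈ I)
      (_ : IsUnit (Ideal.Quotient.mk I (f.derivative.eval a₀))), ∃ a : R, f.IsRoot a ∧ a - a₀ ∈ I := by
  intro f a₀ h₁ h₂
  classical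
    let f' := derivative f
    -- we define a sequence `c n` by starting at `a₀` and then continually
    -- applying the function sending `b` to `b - f(b)/f'(b)` (Newton's method).
    -- Note that `f'.eval b` is a unit, because `b` has the same residue as `a₀` modulo `I`.
    let c : ℕ → R := fun n => Nat.recOn n a₀ fun _ b => b - f.eval b * (f'.eval b)⁻¹ʳ
    have hc : ∀ n, c (n + 1) = c n - f.eval (c n) * (f'.eval (c n))⁻¹ʳ := by
      intro n
      simp only [c]
    -- we now spend some time determining properties of the sequence `c : ℕ → R`
    -- `hc_mod`: for every `n`, we have `c n ≡ a₀ [SMOD I]`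
    -- `hf'c`  : for every `n`, `f'.eval (c n)` is a unit
    -- `hfcI`  : for every `n`, `f.eval (c n)` is contained in `I ^ (n+1)`
    have hc_mod : ∀ n, c n ≡ a₀ [SMOD I] := by
      intro n
      induction n with
      | zero => rfl
      | succ n ih => ?_
      rw [hc, sub_eq_add_neg, ← add_zero a₀]
      refine ih.add ?_
      rw [SModEq.zero, Ideal.neg_mem_iff]
      refine I.mul_mem_right _ ?_
      rw [← SModEq.zero] at h₁ ⊢
      exact (ih.eval f).trans h₁
    have hf'c : ∀ n, IsUnit (f'.eval (c n)) := by
      intro n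
      have := isLocalHom_of_le_jacobson_bot I (IsAdicComplete.le_jacobson_bot I)
      apply IsUnit.of_map (Ideal.Quotient.mk I)
      convert! h₂ using 1
      exact SModEq.def.mp ((hc_mod n).eval _)
    have hfcI : ∀ n, f.eval (c n) ∈ I ^ (n + 1) := by
      intro n
      induction n with
      | zero => simpa only [Nat.rec_zero, zero_add, pow_one] using! h₁
      | succ n ih => ?_
      rw [← taylor_eval_sub (c n), hc, sub_eq_add_neg, sub_eq_add_neg,
        add_neg_cancel_comm]
      rw [eval_eq_sum, sum_over_range' _ _ _ (lt_add_of_pos_right _ zero_lt_two), ←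
        Finset.sum_range_add_sum_Ico _ (Nat.le_add_left _ _)]
      swap
      · intro i
        rw [zero_mul]
      refine Ideal.add_mem _ ?_ ?_
      · rw [← one_add_one_eq_two, Finset.sum_range_succ, Finset.range_one, Finset.sum_singleton,
          taylor_coeff_zero, taylor_coeff_one, pow_zero, pow_one, mul_one, mul_neg,
          mul_left_comm, Ring.mul_inverse_cancel _ (hf'c n), mul_one, add_neg_cancel]
        exact Ideal.zero_mem _
      · refine Submodule.sum_mem _ ?_
        simp only [Finset.mem_Ico]
        rintro i ⟨h2i, _⟩
        have aux : n + 2 ≤ i * (n + 1) := by trans 2 * (n + 1) <;> nlinarith only [h2i]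
        refine Ideal.mul_mem_left _ _ (Ideal.pow_le_pow_right aux ?_)
        rw [pow_mul']
        exact Ideal.pow_mem_pow ((Ideal.neg_mem_iff _).2 <| Ideal.mul_mem_right _ _ ih) _
    -- we are now in the position to show that `c : ℕ → R` is a Cauchy sequence
    have aux : ∀ m n, m ≤ n → c m ≡ c n [SMOD (I ^ m • ⊤ : Ideal R)] := by
      intro m n hmn
      rw [← Ideal.one_eq_top, Ideal.smul_eq_mul, mul_one]
      obtain ⟨k, rfl⟩ := Nat.exists_eq_add_of_le hmn
      clear hmn
      induction k with
      | zero => rw [add_zero]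
      | succ k ih => ?_
      rw [← add_assoc, hc, ← add_zero (c m), sub_eq_add_neg]
      refine ih.add ?_
      symm
      rw [SModEq.zero, Ideal.neg_mem_iff]
      refine Ideal.mul_mem_right _ _ (Ideal.pow_le_pow_right ?_ (hfcI _))
      rw [add_assoc]
      exact le_self_add
    -- hence the sequence converges to some limit point `a`, which is the `a` we are looking for
    obtain ⟨a, ha⟩ := IsPrecomplete.prec' c (aux _ _)
    refine ⟨a, ?_, ?_⟩
    · show f.IsRoot a
      suffices ∀ n, f.eval a ≡ 0 [SMOD (I ^ n • ⊤ : Ideal R)] by exact IsHausdorff.haus' _ this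
      intro n
      specialize ha n
      rw [← Ideal.one_eq_top, Ideal.smul_eq_mul, mul_one] at ha ⊢
      refine (ha.symm.eval f).trans ?_
      rw [SModEq.zero]
      exact Ideal.pow_le_pow_right le_self_add (hfcI _)
    · show a - a₀ ∈ I
      specialize ha (0 + 1)
      rw [hc, pow_one, ← Ideal.one_eq_top, Ideal.smul_eq_mul, mul_one, sub_eq_add_neg] at ha
      rw [← SModEq.sub_mem, ← add_zero a₀]
      refine ha.symm.trans (SModEq.rfl.add ?_)
      rw [SModEq.zero, Ideal.neg_mem_iff]
      exact Ideal.mul_mem_right _ _ h₁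

theorem ps_const {F : Type*} [Field F] (z : PowerSeries F) (hz : IsAlgebraic F z) :
    ∃ c : F, algebraMap F (PowerSeries F) c = z := by
  refine ⟨PowerSeries.constantCoeff z, ?_⟩
  by_contra hne
  have hw : IsIntegral F (z - algebraMap F (PowerSeries F) (PowerSeries.constantCoeff z)) :=
    (hz.isIntegral).sub isIntegral_algebraMap
  have hu := IsArtinianRing.isUnit_of_isIntegral_of_nonZeroDivisor hw
    (mem_nonZeroDivisors_of_ne_zero (sub_ne_zero.2 (Ne.symm hne)))
  rw [PowerSeries.isUnit_iff_constantCoeff] at hu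
  simp at hu

theorem ls_const {F : Type*} [Field F] (z : FractionRing (PowerSeries F)) (hz : IsAlgebraic F z) :
    ∃ c : F, algebraMap F (FractionRing (PowerSeries F)) c = z := by
  have h1 : IsIntegral (PowerSeries F) z := hz.isIntegral.tower_top
  obtain ⟨y, rfl⟩ := IsIntegrallyClosed.isIntegral_iff.1 h1
  have h2 : IsAlgebraic F y :=
    (isAlgebraic_algebraMap_iff (IsFractionRing.injective (PowerSeries F) (FractionRing (PowerSeries F)))).1 hz
  obtain ⟨c, rfl⟩ := ps_const y h2
  exact ⟨c, IsScalarTower.algebraMap_apply F (PowerSeries F) (FractionRing (PowerSeries F)) c⟩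

theorem core_embed {F K : Type*} [Field F] [Field K] [Algebra F K]
    (hK : ∀ z : K, IsAlgebraic F z → ∃ c : F, algebraMap F K c = z)
    (s : K) (hs : ¬ ∃ c : F, algebraMap F K c = s)
    (f g : F[X])
    (hsp : (f.map (algebraMap F K) - C s * g.map (algebraMap F K)).Splits)
    (P : Polynomial (RatFunc F))
    (hP : P = f.map (algebraMap F (RatFunc F))
        - Polynomial.C RatFunc.X * g.map (algebraMap F (RatFunc F))) :
    ∀ z : P.SplittingField, IsAlgebraic F z →
      ∃ c : F, algebraMap F P.SplittingField c = z := by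
  have htr : Transcendental F s := fun h => hs (hK s h)
  have hinj : Function.Injective (aeval s : F[X] →ₐ[F] K) :=
    transcendental_iff_injective.1 htr
  let φ : RatFunc F →+* K := IsFractionRing.lift (A := F[X]) (g := (aeval s : F[X] →ₐ[F] K).toRingHom) hinj
  have hφ : ∀ p : F[X], φ (algebraMap F[X] (RatFunc F) p) = aeval s p := fun p =>
    IsFractionRing.lift_algebraMap (A := F[X]) (g := (aeval s : F[X] →ₐ[F] K).toRingHom) hinj p
  have hφX : φ RatFunc.X = s := by
    rw [← RatFunc.algebraMap_X, hφ, aeval_X]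
  have hφC : φ.comp (algebraMap F (RatFunc F)) = algebraMap F K := by
    ext c
    rw [RingHom.comp_apply, IsScalarTower.algebraMap_apply F F[X] (RatFunc F), hφ]
    simp
  have hmap : P.map φ = f.map (algebraMap F K) - C s * g.map (algebraMap F K) := by
    rw [hP]
    simp only [Polynomial.map_sub, Polynomial.map_mul, Polynomial.map_C, Polynomial.map_map, hφC, hφX]
  let _ : Algebra (RatFunc F) K := φ.toAlgebra
  have hal : algebraMap (RatFunc F) K = φ := rfl
  let ψ : P.SplittingField →ₐ[RatFunc F] K := SplittingField.lift P (by rw [hal, hmap]; exact hsp)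
  have hψ : ∀ c : F, ψ (algebraMap F P.SplittingField c) = algebraMap F K c := by
    intro c
    rw [IsScalarTower.algebraMap_apply F (RatFunc F) P.SplittingField, ψ.commutes, hal,
      ← hφC, RingHom.comp_apply]
  intro z hz
  have hz' : IsAlgebraic F (ψ z) := by
    obtain ⟨p, hp0, hp⟩ := hz
    refine ⟨p, hp0, ?_⟩
    have h3 : (ψ.toRingHom).comp (algebraMap F P.SplittingField) = algebraMap F K := by
      ext c; exact hψ c
    rw [aeval_def, ← h3]
    have := congrArg ψ.toRingHom hp
    rw [aeval_def, hom_eval₂, map_zero] at this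
    exact this
  obtain ⟨c, hc⟩ := hK _ hz'
  exact ⟨c, ψ.toRingHom.injective ((hψ c).trans hc)⟩

theorem splits_aux {F : Type*} [Field F] [DecidableEq F] (u v : F[X]) (S : Finset F) (hu0 : u ≠ 0)
    (hroot : ∀ a ∈ S, u.eval a = 0) (hcard : u.natDegree ≤ S.card)
    (hu : u.natDegree ≤ S.card + 1) (hv : v.natDegree ≤ S.card + 1) :
    (u.map (algebraMap F (FractionRing (PowerSeries F))) -
      C (algebraMap (PowerSeries F) (FractionRing (PowerSeries F)) PowerSeries.X) *
        v.map (algebraMap F (FractionRing (PowerSeries F)))).Splits := by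
  classical
  set V : (PowerSeries F)[X] := u.map (algebraMap F (PowerSeries F)) -
    C PowerSeries.X * v.map (algebraMap F (PowerSeries F)) with hV
  set ι := algebraMap (PowerSeries F) (FractionRing (PowerSeries F)) with hι
  have hιinj : Function.Injective ι := IsFractionRing.injective (PowerSeries F) (FractionRing (PowerSeries F))
  have hmap : V.map ι = u.map (algebraMap F (FractionRing (PowerSeries F))) -
      C (ι PowerSeries.X) * v.map (algebraMap F (FractionRing (PowerSeries F))) := by
    simp only [hV, Polynomial.map_sub, Polynomial.map_mul, Polynomial.map_C, Polynomial.map_map, hι,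
      ← IsScalarTower.algebraMap_eq F (PowerSeries F) (FractionRing (PowerSeries F))]
  rw [← hmap]
  have hsub : S.val ≤ u.roots := by
    rw [Multiset.le_iff_subset S.nodup]
    intro a ha
    exact (mem_roots hu0).2 (hroot a ha)
  have hSr : S.val = u.roots :=
    Multiset.eq_of_le_of_card_le hsub ((card_roots' u).trans hcard)
  have hder : ∀ a ∈ S, u.derivative.eval a ≠ 0 := by
    intro a ha h0
    have h1 : 1 < u.rootMultiplicity a :=
      (one_lt_rootMultiplicity_iff_isRoot hu0).2 ⟨hroot a ha, h0⟩
    rw [← count_roots, ← hSr] at h1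
    exact absurd (Multiset.nodup_iff_count_le_one.1 S.nodup a) (by omega)
  have hens : ∀ a ∈ S, ∃ x : PowerSeries F, V.IsRoot x ∧ PowerSeries.constantCoeff x = a := by
    intro a ha
    have e1 : V.eval (algebraMap F (PowerSeries F) a) = algebraMap F _ (u.eval a) -
        PowerSeries.X * algebraMap F _ (v.eval a) := by
      simp only [hV, eval_sub, eval_mul, eval_C, eval_map_algebraMap, aeval_algebraMap_apply,
        coe_aeval_eq_eval]
    have e2 : V.derivative.eval (algebraMap F (PowerSeries F) a) =
        algebraMap F _ (u.derivative.eval a) -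
        PowerSeries.X * algebraMap F _ (v.derivative.eval a) := by
      simp only [hV, derivative_sub, derivative_C_mul, derivative_map, eval_sub, eval_mul, eval_C,
        eval_map_algebraMap, aeval_algebraMap_apply, coe_aeval_eq_eval]
    obtain ⟨x, hx, hxa⟩ := hensel_nonmonic (PowerSeries F) (Ideal.span {PowerSeries.X}) V
      (algebraMap F (PowerSeries F) a) (by
        rw [e1, hroot a ha, map_zero, zero_sub, Ideal.mem_span_singleton]
        exact (dvd_mul_right _ _).neg_right) (by
        apply IsUnit.map
        rw [e2, PowerSeries.isUnit_iff_constantCoeff]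
        simpa using hder a ha)
    refine ⟨x, hx, ?_⟩
    rw [Ideal.mem_span_singleton, PowerSeries.X_dvd_iff, map_sub, sub_eq_zero] at hxa
    simpa using hxa
  choose! r hr hrc using hens
  by_cases hV0 : V.map ι = 0
  · rw [hV0]; exact Splits.zero
  have hinj : Set.InjOn (fun a => ι (r a)) S := by
    intro a ha b hb hab
    have := hιinj hab
    rw [← hrc a ha, ← hrc b hb, this]
  let T : Finset (FractionRing (PowerSeries F)) := S.image (fun a => ι (r a))
  have hT : T.card = S.card := Finset.card_image_of_injOn hinj
  have hTr : T.val ≤ (V.map ι).roots := by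
    rw [Multiset.le_iff_subset T.nodup]
    intro y hy
    obtain ⟨a, ha, rfl⟩ := Finset.mem_image.1 hy
    rw [mem_roots hV0]
    exact (hr a ha).map
  have hdvd := (Multiset.prod_X_sub_C_dvd_iff_le_roots hV0 T.val).2 hTr
  obtain ⟨R, hR⟩ := hdvd
  have hR0 : R ≠ 0 := by rintro rfl; exact hV0 (by rw [hR, mul_zero])
  have hmon : (T.val.map fun a => X - C a).prod.Monic := monic_multiset_prod_of_monic _ _ fun a _ => monic_X_sub_C a
  have hdeg : (V.map ι).natDegree ≤ S.card + 1 := by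
    rw [hmap]
    refine (natDegree_sub_le _ _).trans (max_le ?_ ?_)
    · rwa [natDegree_map]
    · refine (natDegree_C_mul_le _ _).trans ?_
      rwa [natDegree_map]
  have hRd : R.natDegree ≤ 1 := by
    rw [hR, hmon.natDegree_mul' hR0, natDegree_multiset_prod_X_sub_C_eq_card] at hdeg
    have : T.val.card = S.card := hT
    omega
  rw [hR]
  refine Splits.mul (Splits.multisetProd ?_) (Splits.of_natDegree_le_one hRd)
  intro p hp
  obtain ⟨a, _, rfl⟩ := Multiset.mem_map.1 hp
  exact Splits.X_sub_C a

theorem ls_X_not_const {F : Type*} [Field F] (c : F) :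
    algebraMap F (FractionRing (PowerSeries F)) c ≠ algebraMap (PowerSeries F) (FractionRing (PowerSeries F)) PowerSeries.X := by
  rw [IsScalarTower.algebraMap_apply F (PowerSeries F) (FractionRing (PowerSeries F))]
  intro h
  have := IsFractionRing.injective (PowerSeries F) (FractionRing (PowerSeries F)) h
  have := congrArg (PowerSeries.coeff 1) this
  simp [PowerSeries.algebraMap_apply, PowerSeries.coeff_C] at this

/-- If the rational function `h = f/g` is good (some fiber of the induced map on
`P¹(F_q)` has `deg h` elements), then the constant field of the splitting field `M_h`
of `f(X) - t·g(X)` over `F_q(t)` is `F_q` itself: every element of `M_h` algebraic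
over `F_q` lies in the image of `F_q`. -/
theorem stmt3 {F : Type*} [Field F] [Fintype F] [DecidableEq F]
    (f g : Polynomial F) (hcop : IsCoprime f g)
    (hsep : ¬ ∃ p : Polynomial F,
        derivative f * g - derivative g * f = Polynomial.expand F (Fintype.card F) p)
    (hgood : ∃ b : Option F,
        (Finset.univ.filter (fun x : Option F => ratEval f g x = b)).card
          = max f.natDegree g.natDegree)
    (P : Polynomial (RatFunc F))
    (hP : P = f.map (algebraMap F (RatFunc F))
        - Polynomial.C RatFunc.X * g.map (algebraMap F (RatFunc F))) :
    ∀ z : P.SplittingField, IsAlgebraic F z →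
      ∃ c : F, algebraMap F P.SplittingField c = z := by
  have hW : derivative f * g - derivative g * f ≠ 0 := by
    intro h
    exact hsep ⟨0, by rw [h, map_zero]⟩
  have hn : 0 < max f.natDegree g.natDegree := by
    by_contra h
    have h1 : f.natDegree = 0 := by omega
    have h2 : g.natDegree = 0 := by omega
    apply hW
    rw [derivative_of_natDegree_zero h1, derivative_of_natDegree_zero h2]
    simp
  obtain ⟨b, hb⟩ := hgood
  have hcount : ∀ b : Option F, (Finset.univ.filter (fun x : Option F => ratEval f g x = b)).card
      = (if ratEval f g none = b then 1 else 0) +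
        (Finset.univ.filter (fun x : F => ratEval f g (some x) = b)).card := by
    intro b
    simp only [Finset.card_filter, Fintype.sum_option]
  rw [hcount] at hb
  set S := Finset.univ.filter (fun x : F => ratEval f g (some x) = b) with hS
  set x := algebraMap (PowerSeries F) (FractionRing (PowerSeries F)) PowerSeries.X with hx
  have hx0 : x ≠ 0 := by
    have := ls_X_not_const (0 : F)
    rw [map_zero] at this
    exact this.symm
  have hle : max f.natDegree g.natDegree ≤ S.card + 1 := by
    rw [← hb]; split_ifs <;> omega
  have hf1 := (le_max_left _ _).trans hle
  have hg1 := (le_max_right _ _).trans hle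
  cases b with
  | none =>
    have hsp := splits_aux g f S (by rintro rfl; simp at hW)
      (by
        intro a ha
        have := (Finset.mem_filter.1 ha).2
        by_contra h
        simp [ratEval, h] at this)
      (by
        by_cases h : ratEval f g none = none
        · simp only [ratEval] at h
          have h' : g.natDegree < f.natDegree := by
            by_contra h'
            rw [if_neg h'] at h
            split_ifs at h
          rw [max_eq_left h'.le] at hb
          split_ifs at hb <;> omega
        · rw [if_neg h] at hb
          omega) hg1 hf1
    refine core_embed (K := FractionRing (PowerSeries F)) ls_const x⁻¹ ?_ f g ?_ P hP
    · rintro ⟨c, hc⟩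
      apply ls_X_not_const (c⁻¹)
      rw [map_inv₀, hc, inv_inv]
    · have e : f.map (algebraMap F (FractionRing (PowerSeries F))) - C x⁻¹ * g.map (algebraMap F (FractionRing (PowerSeries F)))
          = C (-x⁻¹) * (g.map (algebraMap F (FractionRing (PowerSeries F))) -
            C x * f.map (algebraMap F (FractionRing (PowerSeries F)))) := by
        rw [mul_sub, ← mul_assoc, ← C_mul, neg_mul, inv_mul_cancel₀ hx0]
        simp only [C_neg, C_1]
        ring
      rw [e]
      exact (Splits.C _).mul hsp
  | some b =>
    have hsp := splits_aux (f - C b * g) g S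
      (by
        intro h
        apply hW
        rw [sub_eq_zero.1 h]
        simp only [derivative_C_mul]
        ring)
      (by
        intro a ha
        have := (Finset.mem_filter.1 ha).2
        by_cases h : g.eval a = 0
        · simp [ratEval, h] at this
        · simp only [ratEval, if_neg h, Option.some.injEq] at this
          rw [div_eq_iff h] at this
          simp [this])
      (by
        have hd : (f - C b * g).natDegree ≤ max f.natDegree g.natDegree :=
          (natDegree_sub_le _ _).trans (max_le_max le_rfl (natDegree_C_mul_le _ _))
        by_cases h : ratEval f g none = some b
        · have hc : (f - C b * g).coeff (max f.natDegree g.natDegree) = 0 := by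
            rw [coeff_sub, coeff_C_mul]
            simp only [ratEval] at h
            split_ifs at h with h1 h2
            · rw [Option.some.injEq] at h
              rw [← h, h2, max_self]
              have : g.leadingCoeff ≠ 0 := by
                rw [leadingCoeff_ne_zero]
                rintro rfl
                simp at hW
              have h3 : f.coeff g.natDegree = f.leadingCoeff := by rw [← h2]; rfl
              rw [h3, coeff_natDegree, div_mul_cancel₀ _ this, sub_self]
            · rw [Option.some.injEq] at h
              rw [← h, zero_mul, sub_zero]
              apply coeff_eq_zero_of_natDegree_lt
              exact lt_max_of_lt_right (by omega)
          have hlt : (f - C b * g).natDegree ≠ max f.natDegree g.natDegree := by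
            intro h'
            rw [← h', coeff_natDegree, leadingCoeff_eq_zero] at hc
            rw [hc, natDegree_zero] at h'
            omega
          rw [if_pos h] at hb
          omega
        · rw [if_neg h] at hb
          omega)
      ((natDegree_sub_le _ _).trans (max_le hf1 ((natDegree_C_mul_le _ _).trans hg1))) hg1
    refine core_embed (K := FractionRing (PowerSeries F)) ls_const (x + algebraMap F _ b) ?_ f g ?_ P hP
    · rintro ⟨c, hc⟩
      apply ls_X_not_const (c - b)
      rw [map_sub, hc, add_sub_cancel_right]
    · have e : f.map (algebraMap F (FractionRing (PowerSeries F))) -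
          C (x + algebraMap F _ b) * g.map (algebraMap F (FractionRing (PowerSeries F)))
          = (f - C b * g).map (algebraMap F (FractionRing (PowerSeries F))) -
            C x * g.map (algebraMap F (FractionRing (PowerSeries F))) := by
        simp only [Polynomial.map_sub, Polynomial.map_mul, Polynomial.map_C, C_add]
        ring
      rw [e]
      exact hsp
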